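/- arXiv:2011.05172 — 14 statements merged into one kernel-verified Lean document; each statement's English description precedes it below -/
import Mathlib

section
/- Let (A, ≺_ω, ≻_ω, Ω) be a pre-anti-flexible family algebra. Define, for all α, β ∈ Ω and x, y ∈ A, x ∗_{α,β} y := x ≻_α y + x ≺_β y. Then (A, ∗_{α,β}, Ω) is an Ω-relative anti-flexible algebra, i.e. (x ∗_{α,β} y) ∗_{αβ,γ} z − x ∗_{α,βγ} (y ∗_{β,γ} z) = (z ∗_{γ,β} y) ∗_{γβ,α} x − z ∗_{γ,βα} (y ∗_{β,α} x) for all x, y, z ∈ A and α, β, γ ∈ Ω. -/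
/-- The sum product `x ∗_{α,β} y := x ≻_α y + x ≺_β y` of a
pre-anti-flexible family algebra yields an Ω-relative anti-flexible algebra. -/
theorem preAntiFlexibleFamily_to_relativeAntiFlexible
    (k : Type*) [Field k] (Ω : Type*) [CommSemigroup Ω]
    (A : Type*) [AddCommGroup A] [Module k A]
    (prec succ : Ω → A →ₗ[k] A →ₗ[k] A)
    (h1 : ∀ (α β : Ω) (x y z : A),
      prec β (succ α x y) z - succ α x (prec β y z) =
        prec α (succ β z y) x - succ β z (prec α y x))
    (h2 : ∀ (α β : Ω) (x y z : A),
      succ (α * β) (succ α x y + prec β x y) z - succ α x (succ β y z) =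
        prec α (prec β z y) x - prec (β * α) z (succ β y x + prec α y x))
    (star : Ω → Ω → A → A → A)
    (hstar : ∀ (α β : Ω) (x y : A), star α β x y = succ α x y + prec β x y) :
    ∀ (α β γ : Ω) (x y z : A),
      star (α * β) γ (star α β x y) z - star α (β * γ) x (star β γ y z) =
        star (γ * β) α (star γ β z y) x - star γ (β * α) z (star β α y x) := by
  intro α β γ x y z
  have e1 := h1 α γ x y z
  have e2 := h2 α β x y z
  have e3 := h2 γ β z y x
  simp only [hstar]
  simp only [map_add, LinearMap.add_apply] at e1 e2 e3 ⊢
  linear_combination (norm := abel) e1 + e2 - e3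
end

section
/- Let k be a field, Ω a commutative semigroup, A a k-vector space, and ≺_ω, ≻_ω : A × A → A (ω ∈ Ω) two families of k-bilinear operations. Let ≺, ≻ be k-bilinear operations on the tensor product A ⊗_k k[Ω] (where k[Ω] is the semigroup algebra of Ω over k) satisfying, on pure tensors, (x ⊗ α) ≺ (y ⊗ β) = (x ≺_β y) ⊗ αβ and (x ⊗ α) ≻ (y ⊗ β) = (x ≻_α y) ⊗ αβ for all x, y ∈ A and α, β ∈ Ω. Then (A ⊗_k k[Ω], ≺, ≻) is a pre-anti-flexible algebra if and only if (A, ≺_ω, ≻_ω, Ω) is a pre-anti-flexible family algebra. -/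
open TensorProduct

theorem tensor_ind_aux {k : Type*} [Field k] {Ω : Type*}
    {A : Type*} [AddCommGroup A] [Module k A] {p : A ⊗[k] MonoidAlgebra k Ω → Prop}
    (h0 : p 0) (hadd : ∀ X Y, p X → p Y → p (X + Y))
    (hs : ∀ (x : A) (α : Ω), p (x ⊗ₜ MonoidAlgebra.single α (1 : k))) (X) : p X := by
  induction X using TensorProduct.induction_on with
  | zero => exact h0
  | add X Y hX hY => exact hadd X Y hX hY
  | tmul x f =>
    induction f using MonoidAlgebra.induction_linear with
    | zero => simpa using h0
    | add f g hf hg => rw [TensorProduct.tmul_add]; exact hadd _ _ hf hg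
    | single α r =>
      have h : (MonoidAlgebra.single α r : MonoidAlgebra k Ω)
          = r • MonoidAlgebra.single α (1 : k) := by simp
      rw [h, ← TensorProduct.smul_tmul]
      exact hs _ _

theorem tensor_single_inj_aux {k : Type*} [Field k] {Ω : Type*}
    {A : Type*} [AddCommGroup A] [Module k A] (g : Ω) {a b : A}
    (h : a ⊗ₜ[k] (MonoidAlgebra.single g (1 : k)) = b ⊗ₜ[k] (MonoidAlgebra.single g (1 : k))) :
    a = b := by
  have hne : (MonoidAlgebra.single g (1 : k)) ≠ 0 := by simp
  obtain ⟨f, hf⟩ := (show ∃ f : MonoidAlgebra k Ω →ₗ[k] k, f (MonoidAlgebra.single g (1 : k)) = 1 from by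
    by_contra hc
    push Not at hc
    apply hne
    refine (Module.forall_dual_apply_eq_zero_iff k _).1 fun f => ?_
    by_contra hf
    exact hc ((f (MonoidAlgebra.single g (1 : k)))⁻¹ • f) (by simp [hf]))
  have := congrArg (fun t => TensorProduct.rid k A (f.lTensor A t)) h
  simpa [hf] using this

/-- `(A ⊗ k[Ω], ≺, ≻)` with `(x⊗α) ≺ (y⊗β) = (x ≺_β y) ⊗ αβ` and
`(x⊗α) ≻ (y⊗β) = (x ≻_α y) ⊗ αβ` is a pre-anti-flexible algebra iff
`(A, ≺_ω, ≻_ω, Ω)` is a pre-anti-flexible family algebra. -/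
theorem preAntiFlexibleFamily_iff_tensor_preAntiFlexible
    (k : Type*) [Field k] (Ω : Type*) [CommSemigroup Ω]
    (A : Type*) [AddCommGroup A] [Module k A]
    (prec succ : Ω → A →ₗ[k] A →ₗ[k] A)
    (P S : A ⊗[k] MonoidAlgebra k Ω →ₗ[k]
      A ⊗[k] MonoidAlgebra k Ω →ₗ[k] A ⊗[k] MonoidAlgebra k Ω)
    (hP : ∀ (x y : A) (α β : Ω),
      P (x ⊗ₜ MonoidAlgebra.single α (1 : k)) (y ⊗ₜ MonoidAlgebra.single β (1 : k)) =
        (prec β x y) ⊗ₜ MonoidAlgebra.single (α * β) (1 : k))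
    (hS : ∀ (x y : A) (α β : Ω),
      S (x ⊗ₜ MonoidAlgebra.single α (1 : k)) (y ⊗ₜ MonoidAlgebra.single β (1 : k)) =
        (succ α x y) ⊗ₜ MonoidAlgebra.single (α * β) (1 : k)) :
    ((∀ X Y Z : A ⊗[k] MonoidAlgebra k Ω,
        P (S X Y) Z - S X (P Y Z) = P (S Z Y) X - S Z (P Y X)) ∧
     (∀ X Y Z : A ⊗[k] MonoidAlgebra k Ω,
        S (S X Y + P X Y) Z - S X (S Y Z) =
          P (P Z Y) X - P Z (S Y X + P Y X))) ↔
    ((∀ (α β : Ω) (x y z : A),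
        prec β (succ α x y) z - succ α x (prec β y z) =
          prec α (succ β z y) x - succ β z (prec α y x)) ∧
     (∀ (α β : Ω) (x y z : A),
        succ (α * β) (succ α x y + prec β x y) z - succ α x (succ β y z) =
          prec α (prec β z y) x - prec (β * α) z (succ β y x + prec α y x))) := by
  constructor
  · rintro ⟨h1, h2⟩
    refine ⟨fun α β x y z => ?_, fun α β x y z => ?_⟩
    · have h := h1 (x ⊗ₜ MonoidAlgebra.single α (1 : k)) (y ⊗ₜ MonoidAlgebra.single α (1 : k))
        (z ⊗ₜ MonoidAlgebra.single β (1 : k))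
      simp only [hS, hP] at h
      have e1 : α * (α * β) = α * α * β := (mul_assoc _ _ _).symm
      have e2 : β * α * α = α * α * β := by rw [mul_assoc, mul_comm]
      have e3 : β * (α * α) = α * α * β := mul_comm _ _
      rw [e1, e2, e3, ← TensorProduct.sub_tmul, ← TensorProduct.sub_tmul] at h
      exact tensor_single_inj_aux _ h
    · have h := h2 (x ⊗ₜ MonoidAlgebra.single α (1 : k)) (y ⊗ₜ MonoidAlgebra.single β (1 : k))
        (z ⊗ₜ MonoidAlgebra.single α (1 : k))
      simp only [hS, hP, ← TensorProduct.add_tmul] at h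
      have e1 : α * (β * α) = α * β * α := (mul_assoc _ _ _).symm
      rw [e1, ← TensorProduct.sub_tmul, ← TensorProduct.sub_tmul] at h
      exact tensor_single_inj_aux _ h
  · rintro ⟨h1, h2⟩
    refine ⟨fun X Y Z => ?_, fun X Y Z => ?_⟩
    · induction X using tensor_ind_aux with
      | h0 => simp
      | hadd X X' hX hX' =>
        simp only [map_add, LinearMap.add_apply]
        rw [add_sub_add_comm, hX, hX', add_sub_add_comm]
      | hs x α =>
      induction Y using tensor_ind_aux with
      | h0 => simp
      | hadd X X' hX hX' =>
        simp only [map_add, LinearMap.add_apply]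
        rw [add_sub_add_comm, hX, hX', add_sub_add_comm]
      | hs y β =>
      induction Z using tensor_ind_aux with
      | h0 => simp
      | hadd X X' hX hX' =>
        simp only [map_add, LinearMap.add_apply]
        rw [add_sub_add_comm, hX, hX', add_sub_add_comm]
      | hs z γ =>
      simp only [hS, hP]
      have e1 : α * (β * γ) = α * β * γ := (mul_assoc _ _ _).symm
      have e2 : γ * β * α = α * β * γ := by rw [mul_comm, mul_comm γ, mul_assoc]
      have e3 : γ * (β * α) = α * β * γ := by rw [mul_comm, mul_comm β]
      rw [e1, e2, e3, ← TensorProduct.sub_tmul, ← TensorProduct.sub_tmul, h1]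
    · induction X using tensor_ind_aux with
      | h0 => simp
      | hadd X X' hX hX' =>
        simp only [map_add, LinearMap.add_apply] at hX hX' ⊢
        have := congrArg₂ (· + ·) hX hX'
        rw [← sub_eq_zero] at this ⊢
        rw [← this]
        abel
      | hs x α =>
      induction Y using tensor_ind_aux with
      | h0 => simp
      | hadd X X' hX hX' =>
        simp only [map_add, LinearMap.add_apply] at hX hX' ⊢
        have := congrArg₂ (· + ·) hX hX'
        rw [← sub_eq_zero] at this ⊢
        rw [← this]
        abel
      | hs y β =>
      induction Z using tensor_ind_aux with
      | h0 => simp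
      | hadd X X' hX hX' =>
        simp only [map_add, LinearMap.add_apply] at hX hX' ⊢
        have := congrArg₂ (· + ·) hX hX'
        rw [← sub_eq_zero] at this ⊢
        rw [← this]
        abel
      | hs z γ =>
      simp only [hS, hP, ← TensorProduct.add_tmul]
      have e1 : α * (β * γ) = α * β * γ := (mul_assoc _ _ _).symm
      have e2 : γ * β * α = α * β * γ := by rw [mul_comm, mul_comm γ, mul_assoc]
      have e3 : γ * (β * α) = α * β * γ := by rw [mul_comm, mul_comm β]
      rw [e1, e2, e3, ← TensorProduct.sub_tmul, ← TensorProduct.sub_tmul, h2]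
end

section
/- Let (A, ≺_ω, ≻_ω, Ω) be a pre-anti-flexible family algebra. Define, for each ω ∈ Ω and x, y ∈ A, x ▷_ω y := x ≻_ω y − y ≺_ω x. Then (A, ▷_ω, Ω) is a left pre-Lie family algebra, i.e. (x ▷_α y) ▷_{αβ} z − x ▷_α (y ▷_β z) = (y ▷_β x) ▷_{βα} z − y ▷_β (x ▷_α z) for all x, y, z ∈ A and α, β ∈ Ω. -/
/-- `x ▷_ω y := x ≻_ω y − y ≺_ω x` turns a pre-anti-flexible family
algebra into a left pre-Lie family algebra. -/
theorem preAntiFlexibleFamily_to_leftPreLieFamily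
    (k : Type*) [Field k] (Ω : Type*) [CommSemigroup Ω]
    (A : Type*) [AddCommGroup A] [Module k A]
    (prec succ : Ω → A →ₗ[k] A →ₗ[k] A)
    (h1 : ∀ (α β : Ω) (x y z : A),
      prec β (succ α x y) z - succ α x (prec β y z) =
        prec α (succ β z y) x - succ β z (prec α y x))
    (h2 : ∀ (α β : Ω) (x y z : A),
      succ (α * β) (succ α x y + prec β x y) z - succ α x (succ β y z) =
        prec α (prec β z y) x - prec (β * α) z (succ β y x + prec α y x))
    (tri : Ω → A → A → A)
    (htri : ∀ (ω : Ω) (x y : A), tri ω x y = succ ω x y - prec ω y x) :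
    ∀ (α β : Ω) (x y z : A),
      tri (α * β) (tri α x y) z - tri α x (tri β y z) =
        tri (β * α) (tri β y x) z - tri β y (tri α x z) := by
  intro α β x y z
  have e1 := h1 α β x z y
  have e2 := h2 α β x y z
  have e3 := h2 β α y x z
  simp only [htri]
  rw [mul_comm β α] at e2 e3 ⊢
  simp only [map_add, map_sub, LinearMap.add_apply, LinearMap.sub_apply] at e1 e2 e3 ⊢
  linear_combination (norm := module) e2 - e3 - e1
end

section
/- Let (A, ≺_ω, ≻_ω, Ω) be a pre-anti-flexible family algebra. Define, for each ω ∈ Ω and x, y ∈ A, x ◁_ω y := x ≺_ω y − y ≻_ω x. Then (A, ◁_ω, Ω) is a right pre-Lie family algebra, i.e. x ◁_{αβ} (y ◁_β z) − (x ◁_α y) ◁_β z = x ◁_{βα} (z ◁_α y) − (x ◁_β z) ◁_α y for all x, y, z ∈ A and α, β ∈ Ω. -/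
/-- `x ◁_ω y := x ≺_ω y − y ≻_ω x` turns a pre-anti-flexible family
algebra into a right pre-Lie family algebra. -/
theorem preAntiFlexibleFamily_to_rightPreLieFamily
    (k : Type*) [Field k] (Ω : Type*) [CommSemigroup Ω]
    (A : Type*) [AddCommGroup A] [Module k A]
    (prec succ : Ω → A →ₗ[k] A →ₗ[k] A)
    (h1 : ∀ (α β : Ω) (x y z : A),
      prec β (succ α x y) z - succ α x (prec β y z) =
        prec α (succ β z y) x - succ β z (prec α y x))
    (h2 : ∀ (α β : Ω) (x y z : A),
      succ (α * β) (succ α x y + prec β x y) z - succ α x (succ β y z) =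
        prec α (prec β z y) x - prec (β * α) z (succ β y x + prec α y x))
    (tril : Ω → A → A → A)
    (htril : ∀ (ω : Ω) (x y : A), tril ω x y = prec ω x y - succ ω y x) :
    ∀ (α β : Ω) (x y z : A),
      tril (α * β) x (tril β y z) - tril β (tril α x y) z =
        tril (β * α) x (tril α z y) - tril α (tril β x z) y := by
  intro α β x y z
  have e1 := h1 α β y x z
  have e2 := h2 α β y z x
  have e3 := h2 β α z y x
  rw [mul_comm β α] at *
  simp only [htril, map_add, map_sub, LinearMap.add_apply, LinearMap.sub_apply] at *
  rw [← sub_eq_zero] at e1 e2 e3 ⊢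
  have e := congrArg₂ (· + ·) e1 (congrArg₂ (· - ·) e3 e2)
  simp only [add_zero, sub_zero] at e
  rw [← e]
  abel
end

section
/- Let (A, ≺_ω, ≻_ω, Ω) be a pre-anti-flexible family algebra. Define, for all α, β ∈ Ω and x, y ∈ A, [x, y]_{α,β} := (x ≻_α y + x ≺_β y) − (y ≻_β x + y ≺_α x). Then (A, [·,·]_{α,β}, Ω) is an Ω-relative Lie algebra: [x,y]_{α,β} + [y,x]_{β,α} = 0 and [[x,y]_{α,β}, z]_{αβ,γ} + [[y,z]_{β,γ}, x]_{βγ,α} + [[z,x]_{γ,α}, y]_{γα,β} = 0 for all x, y, z ∈ A and α, β, γ ∈ Ω. -/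
/-- the commutator bracket `[x,y]_{α,β} := (x ≻_α y + x ≺_β y) −
(y ≻_β x + y ≺_α x)` of a pre-anti-flexible family algebra gives an Ω-relative
Lie algebra. -/
theorem preAntiFlexibleFamily_to_relativeLie
    (k : Type*) [Field k] (Ω : Type*) [CommSemigroup Ω]
    (A : Type*) [AddCommGroup A] [Module k A]
    (prec succ : Ω → A →ₗ[k] A →ₗ[k] A)
    (h1 : ∀ (α β : Ω) (x y z : A),
      prec β (succ α x y) z - succ α x (prec β y z) =
        prec α (succ β z y) x - succ β z (prec α y x))
    (h2 : ∀ (α β : Ω) (x y z : A),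
      succ (α * β) (succ α x y + prec β x y) z - succ α x (succ β y z) =
        prec α (prec β z y) x - prec (β * α) z (succ β y x + prec α y x))
    (br : Ω → Ω → A → A → A)
    (hbr : ∀ (α β : Ω) (x y : A),
      br α β x y = (succ α x y + prec β x y) - (succ β y x + prec α y x)) :
    (∀ (α β : Ω) (x y : A), br α β x y + br β α y x = 0) ∧
    (∀ (α β γ : Ω) (x y z : A),
      br (α * β) γ (br α β x y) z + br (β * γ) α (br β γ y z) x +
        br (γ * α) β (br γ α z x) y = 0) := by
  refine ⟨fun α β x y => by rw [hbr, hbr]; abel, fun α β γ x y z => ?_⟩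
  have a1 := h2 α β x y z
  have a2 := h2 β γ y z x
  have a3 := h2 γ α z x y
  have b1 := h2 γ β z y x
  have b2 := h2 α γ x z y
  have b3 := h2 β α y x z
  have c1 := h1 α γ x y z
  have c2 := h1 β α y z x
  have c3 := h1 γ β z x y
  rw [mul_comm β α] at a1 b3
  rw [mul_comm γ β] at a2 b1
  rw [mul_comm α γ] at a3 b2
  simp only [hbr, map_add, map_sub, LinearMap.add_apply, LinearMap.sub_apply] at *
  linear_combination (norm := skip) a1 + a2 + a3 - b1 - b2 - b3 + c1 + c2 + c3
  abel
end

section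
/- Let (A, ≺_ω, ≻_ω, Ω) be a pre-anti-flexible family algebra, and define x ▷_ω y := x ≻_ω y − y ≺_ω x for ω ∈ Ω. Then for all x, y ∈ A and α, β ∈ Ω, x ▷_α y − y ▷_β x = (x ≻_α y + x ≺_β y) − (y ≻_β x + y ≺_α x); consequently the family of brackets [x,y]_{α,β} := x ▷_α y − y ▷_β x turns A into an Ω-relative Lie algebra, coinciding with the Ω-relative Lie algebra obtained as the commutator of the product x ∗_{α,β} y := x ≻_α y + x ≺_β y. -/
/-- the bracket `[x,y]_{α,β} := x ▷_α y − y ▷_β x` built from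
`x ▷_ω y := x ≻_ω y − y ≺_ω x` coincides with the commutator of
`x ∗_{α,β} y := x ≻_α y + x ≺_β y`, and turns A into an Ω-relative Lie algebra. -/
theorem preLieFamilyCommutator_is_relativeLie
    (k : Type*) [Field k] (Ω : Type*) [CommSemigroup Ω]
    (A : Type*) [AddCommGroup A] [Module k A]
    (prec succ : Ω → A →ₗ[k] A →ₗ[k] A)
    (h1 : ∀ (α β : Ω) (x y z : A),
      prec β (succ α x y) z - succ α x (prec β y z) =
        prec α (succ β z y) x - succ β z (prec α y x))
    (h2 : ∀ (α β : Ω) (x y z : A),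
      succ (α * β) (succ α x y + prec β x y) z - succ α x (succ β y z) =
        prec α (prec β z y) x - prec (β * α) z (succ β y x + prec α y x))
    (tri : Ω → A → A → A)
    (htri : ∀ (ω : Ω) (x y : A), tri ω x y = succ ω x y - prec ω y x)
    (star : Ω → Ω → A → A → A)
    (hstar : ∀ (α β : Ω) (x y : A), star α β x y = succ α x y + prec β x y)
    (br : Ω → Ω → A → A → A)
    (hbr : ∀ (α β : Ω) (x y : A), br α β x y = tri α x y - tri β y x) :
    (∀ (α β : Ω) (x y : A),
      tri α x y - tri β y x = (succ α x y + prec β x y) - (succ β y x + prec α y x)) ∧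
    (∀ (α β : Ω) (x y : A), br α β x y = star α β x y - star β α y x) ∧
    (∀ (α β : Ω) (x y : A), br α β x y + br β α y x = 0) ∧
    (∀ (α β γ : Ω) (x y z : A),
      br (α * β) γ (br α β x y) z + br (β * γ) α (br β γ y z) x +
        br (γ * α) β (br γ α z x) y = 0) := by
  have e1 : ∀ (α β : Ω) (x y : A), br α β x y =
      (succ α x y + prec β x y) - (succ β y x + prec α y x) := by
    intro α β x y
    rw [hbr, htri, htri]; abel
  refine ⟨?_, ?_, ?_, ?_⟩
  · intro α β x y
    rw [htri, htri]; abel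
  · intro α β x y
    rw [e1, hstar, hstar]
  · intro α β x y
    rw [hbr, hbr]; abel
  · intro α β γ x y z
    have a1 := sub_eq_zero.2 (h1 α β x z y)
    have a2 := sub_eq_zero.2 (h1 β γ y x z)
    have a3 := sub_eq_zero.2 (h1 γ α z y x)
    have b1 := sub_eq_zero.2 (h2 α β x y z)
    have b2 := sub_eq_zero.2 (h2 β γ y z x)
    have b3 := sub_eq_zero.2 (h2 γ α z x y)
    have c1 := sub_eq_zero.2 (h2 β α y x z)
    have c2 := sub_eq_zero.2 (h2 γ β z y x)
    have c3 := sub_eq_zero.2 (h2 α γ x z y)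
    have key := congrArg₂ (· - ·)
      (congrArg₂ (· + ·) (congrArg₂ (· + ·) b1 b2) b3)
      (congrArg₂ (· + ·) (congrArg₂ (· + ·) c1 c2) c3)
    have key2 := congrArg₂ (· + ·) (congrArg₂ (· + ·) a1 a2) a3
    have key3 := congrArg₂ (· - ·) key key2
    simp only [add_zero, sub_zero] at key3
    rw [← key3]
    simp only [e1, map_add, map_sub, LinearMap.add_apply, LinearMap.sub_apply,
      mul_comm β α, mul_comm γ β, mul_comm γ α]
    abel
end

section
/- Let (A, ≺_ω, ≻_ω, Ω) be a pre-anti-flexible family algebra with underlying Ω-relative anti-flexible product x ∗_{α,β} y := x ≻_α y + x ≺_β y and brackets [x,y]_{α,β} := x ∗_{α,β} y − y ∗_{β,α} x. Define x ∘_{α,β} y := x ∗_{α,β} y + y ∗_{β,α} x. Then for all x, y, z ∈ A and α, β, γ ∈ Ω, the ∘-associator satisfies (x ∘_{α,β} y) ∘_{αβ,γ} z − x ∘_{α,βγ} (y ∘_{β,γ} z) = [y, [x, z]_{α,γ}]_{β,αγ}. -/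
/-- for the anticommutator `x ∘_{α,β} y := x ∗_{α,β} y + y ∗_{β,α} x`
of the underlying relative anti-flexible product of a pre-anti-flexible family
algebra, the ∘-associator equals `[y, [x,z]_{α,γ}]_{β,αγ}`. -/
theorem preAntiFlexibleFamily_anticommutator_associator
    (k : Type*) [Field k] (Ω : Type*) [CommSemigroup Ω]
    (A : Type*) [AddCommGroup A] [Module k A]
    (prec succ : Ω → A →ₗ[k] A →ₗ[k] A)
    (h1 : ∀ (α β : Ω) (x y z : A),
      prec β (succ α x y) z - succ α x (prec β y z) =
        prec α (succ β z y) x - succ β z (prec α y x))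
    (h2 : ∀ (α β : Ω) (x y z : A),
      succ (α * β) (succ α x y + prec β x y) z - succ α x (succ β y z) =
        prec α (prec β z y) x - prec (β * α) z (succ β y x + prec α y x))
    (star : Ω → Ω → A → A → A)
    (hstar : ∀ (α β : Ω) (x y : A), star α β x y = succ α x y + prec β x y)
    (br : Ω → Ω → A → A → A)
    (hbr : ∀ (α β : Ω) (x y : A), br α β x y = star α β x y - star β α y x)
    (circ : Ω → Ω → A → A → A)
    (hcirc : ∀ (α β : Ω) (x y : A), circ α β x y = star α β x y + star β α y x) :
    ∀ (α β γ : Ω) (x y z : A),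
      circ (α * β) γ (circ α β x y) z - circ α (β * γ) x (circ β γ y z) =
        br β (α * γ) y (br α γ x z) := by
  have key : ∀ (α β γ : Ω) (x y z : A),
      star (α * β) γ (star α β x y) z - star α (β * γ) x (star β γ y z) =
      star (γ * β) α (star γ β z y) x - star γ (β * α) z (star β α y x) := by
    intro α β γ x y z
    have e1 := h1 α γ x y z
    have e2 := h2 α β x y z
    have e3 := h2 γ β z y x
    simp only [hstar, map_add, LinearMap.add_apply] at *
    linear_combination (norm := abel) e1 + e2 - e3
  have hadd_left : ∀ (α β : Ω) (x x' y : A),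
      star α β (x + x') y = star α β x y + star α β x' y := by
    intro α β x x' y
    simp only [hstar, map_add, LinearMap.add_apply]
    abel
  have hadd_right : ∀ (α β : Ω) (x y y' : A),
      star α β x (y + y') = star α β x y + star α β x y' := by
    intro α β x y y'
    simp only [hstar, map_add]
    abel
  have hsub_left : ∀ (α β : Ω) (x x' y : A),
      star α β (x - x') y = star α β x y - star α β x' y := by
    intro α β x x' y
    simp only [hstar, map_sub, LinearMap.sub_apply]
    abel
  have hsub_right : ∀ (α β : Ω) (x y y' : A),
      star α β x (y - y') = star α β x y - star α β x y' := by
    intro α β x y y'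
    simp only [hstar, map_sub]
    abel
  intro α β γ x y z
  have k1 := key α β γ x y z
  have k2 := key β α γ y x z
  have k3 := key α γ β x z y
  simp only [hcirc, hbr, hadd_left, hadd_right, hsub_left, hsub_right]
  rw [mul_comm β α, mul_comm γ α] at k2
  rw [mul_comm γ β] at k3
  rw [mul_comm γ α] at k3
  rw [mul_comm γ β, mul_comm β α] at k1
  linear_combination (norm := abel) k1 + k2 + k3
end

section
/- Let (A, ≺_{α,β}, ≻_{α,β}, Ω) be an Ω-relative pre-anti-flexible algebra. Define, for all (α,β) ∈ Ω² and x, y ∈ A, x ⊛_{α,β} y := x ≺_{α,β} y + x ≻_{α,β} y. Then (A, ⊛_{α,β}, Ω) is an Ω-relative anti-flexible algebra, i.e. (x ⊛_{α,β} y) ⊛_{αβ,γ} z − x ⊛_{α,βγ} (y ⊛_{β,γ} z) = (z ⊛_{γ,β} y) ⊛_{γβ,α} x − z ⊛_{γ,βα} (y ⊛_{β,α} x) for all x, y, z ∈ A and α, β, γ ∈ Ω. -/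
/-- the sum `x ⊛_{α,β} y := x ≺_{α,β} y + x ≻_{α,β} y` of an
Ω-relative pre-anti-flexible algebra is an Ω-relative anti-flexible product. -/
theorem relativePreAntiFlexible_to_relativeAntiFlexible
    (k : Type*) [Field k] (Ω : Type*) [CommSemigroup Ω]
    (A : Type*) [AddCommGroup A] [Module k A]
    (prec succ : Ω → Ω → A →ₗ[k] A →ₗ[k] A)
    (h1 : ∀ (α β γ : Ω) (x y z : A),
      prec (α * β) γ (succ α β x y) z - succ α (β * γ) x (prec β γ y z) =
        prec (γ * β) α (succ γ β z y) x - succ γ (β * α) z (prec β α y x))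
    (h2 : ∀ (α β γ : Ω) (x y z : A),
      succ (α * β) γ (prec α β x y + succ α β x y) z - succ α (β * γ) x (succ β γ y z) =
        prec (γ * β) α (prec γ β z y) x - prec γ (β * α) z (prec β α y x + succ β α y x))
    (ast : Ω → Ω → A → A → A)
    (hast : ∀ (α β : Ω) (x y : A), ast α β x y = prec α β x y + succ α β x y) :
    ∀ (α β γ : Ω) (x y z : A),
      ast (α * β) γ (ast α β x y) z - ast α (β * γ) x (ast β γ y z) =
        ast (γ * β) α (ast γ β z y) x - ast γ (β * α) z (ast β α y x) := by
  intro α β γ x y z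
  have e1 := sub_eq_zero.mpr (h1 α β γ x y z)
  have e2 := sub_eq_zero.mpr (h2 α β γ x y z)
  have e3 := sub_eq_zero.mpr (h2 γ β α z y x)
  simp only [hast, map_add, LinearMap.add_apply] at e1 e2 e3 ⊢
  rw [← sub_eq_zero]
  have e := congrArg₂ (· - ·) (congrArg₂ (· + ·) e1 e2) e3
  simp only [add_zero, sub_zero] at e
  rw [← e]
  abel
end

section
/- Let (A, ≺_{α,β}, ≻_{α,β}, Ω) be an Ω-relative pre-anti-flexible algebra. Define, for all (α,β) ∈ Ω² and x, y ∈ A, x ▶_{α,β} y := x ≻_{α,β} y − y ≺_{β,α} x. Then (A, ▶_{α,β}, Ω) is an Ω-relative pre-Lie algebra, i.e. (x ▶_{α,β} y) ▶_{αβ,γ} z − x ▶_{α,βγ} (y ▶_{β,γ} z) = (y ▶_{β,α} x) ▶_{βα,γ} z − y ▶_{β,αγ} (x ▶_{α,γ} z) for all x, y, z ∈ A and α, β, γ ∈ Ω. -/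
/-- `x ▶_{α,β} y := x ≻_{α,β} y − y ≺_{β,α} x` turns an Ω-relative
pre-anti-flexible algebra into an Ω-relative pre-Lie algebra. -/
theorem relativePreAntiFlexible_to_relativePreLie
    (k : Type*) [Field k] (Ω : Type*) [CommSemigroup Ω]
    (A : Type*) [AddCommGroup A] [Module k A]
    (prec succ : Ω → Ω → A →ₗ[k] A →ₗ[k] A)
    (h1 : ∀ (α β γ : Ω) (x y z : A),
      prec (α * β) γ (succ α β x y) z - succ α (β * γ) x (prec β γ y z) =
        prec (γ * β) α (succ γ β z y) x - succ γ (β * α) z (prec β α y x))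
    (h2 : ∀ (α β γ : Ω) (x y z : A),
      succ (α * β) γ (prec α β x y + succ α β x y) z - succ α (β * γ) x (succ β γ y z) =
        prec (γ * β) α (prec γ β z y) x - prec γ (β * α) z (prec β α y x + succ β α y x))
    (tri : Ω → Ω → A → A → A)
    (htri : ∀ (α β : Ω) (x y : A), tri α β x y = succ α β x y - prec β α y x) :
    ∀ (α β γ : Ω) (x y z : A),
      tri (α * β) γ (tri α β x y) z - tri α (β * γ) x (tri β γ y z) =
        tri (β * α) γ (tri β α y x) z - tri β (α * γ) y (tri α γ x z) := by
  intro α β γ x y z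
  have e1 := h2 α β γ x y z
  have e2 := h2 β α γ y x z
  have e3 := h1 α γ β x z y
  simp only [htri, map_add, map_sub, LinearMap.add_apply, LinearMap.sub_apply,
    mul_comm β α, mul_comm γ α, mul_comm γ β] at e1 e2 e3 ⊢
  rw [← sub_eq_zero] at e1 e2 e3 ⊢
  have e4 := congrArg₂ (· - ·) (congrArg₂ (· - ·) e1 e2) e3
  simp only [sub_zero] at e4
  rw [← e4]
  abel
end

section
/- Let k be a field, Ω a commutative semigroup, A a k-vector space, and ≺_{α,β}, ≻_{α,β} : A × A → A ((α,β) ∈ Ω²) two families of k-bilinear operations. Let ≺, ≻ be k-bilinear operations on the tensor product A ⊗_k k[Ω] satisfying, on pure tensors, (x ⊗ α) ≺ (y ⊗ β) = (x ≺_{α,β} y) ⊗ αβ and (x ⊗ α) ≻ (y ⊗ β) = (x ≻_{α,β} y) ⊗ αβ for all x, y ∈ A and α, β ∈ Ω. Then (A ⊗_k k[Ω], ≺, ≻) is a pre-anti-flexible algebra if and only if (A, ≺_{α,β}, ≻_{α,β}, Ω) is an Ω-relative pre-anti-flexible algebra. -/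
open TensorProduct

theorem tensor_single_induction {k Ω A : Type*} [Field k] [AddCommGroup A] [Module k A]
    {p : A ⊗[k] MonoidAlgebra k Ω → Prop} (h0 : p 0) (ha : ∀ X Y, p X → p Y → p (X + Y))
    (hs : ∀ (x : A) (α : Ω), p (x ⊗ₜ MonoidAlgebra.single α (1 : k))) (X) : p X := by
  induction X using TensorProduct.induction_on with
  | zero => exact h0
  | add X Y hX hY => exact ha X Y hX hY
  | tmul x f =>
    induction f using MonoidAlgebra.induction_linear with
    | zero => simpa using h0
    | add f g hf hg => rw [TensorProduct.tmul_add]; exact ha _ _ hf hg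
    | single a b =>
      have h : (MonoidAlgebra.single a b : MonoidAlgebra k Ω)
          = b • MonoidAlgebra.single a 1 := by simp
      rw [h, ← TensorProduct.smul_tmul]
      exact hs _ _

theorem tmul_single_inj {k Ω A : Type*} [Field k] [AddCommGroup A] [Module k A]
    (g : Ω) (a b : A) :
    a ⊗ₜ[k] (MonoidAlgebra.single g (1 : k)) = b ⊗ₜ[k] (MonoidAlgebra.single g (1 : k))
      ↔ a = b := by
  refine ⟨fun h => ?_, fun h => h ▸ rfl⟩
  let e : MonoidAlgebra k Ω →ₗ[k] k :=
    (Finsupp.lapply g).comp (MonoidAlgebra.coeffLinearEquiv k).toLinearMap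
  have h2 := congrArg (fun t => TensorProduct.rid k A (LinearMap.lTensor A e t)) h
  simpa [e] using h2

/-- `(A ⊗ k[Ω], ≺, ≻)` with `(x⊗α) ≺ (y⊗β) = (x ≺_{α,β} y) ⊗ αβ`
and `(x⊗α) ≻ (y⊗β) = (x ≻_{α,β} y) ⊗ αβ` is a pre-anti-flexible algebra iff
`(A, ≺_{α,β}, ≻_{α,β}, Ω)` is an Ω-relative pre-anti-flexible algebra. -/
theorem relativePreAntiFlexible_iff_tensor_preAntiFlexible
    (k : Type*) [Field k] (Ω : Type*) [CommSemigroup Ω]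
    (A : Type*) [AddCommGroup A] [Module k A]
    (prec succ : Ω → Ω → A →ₗ[k] A →ₗ[k] A)
    (P S : A ⊗[k] MonoidAlgebra k Ω →ₗ[k]
      A ⊗[k] MonoidAlgebra k Ω →ₗ[k] A ⊗[k] MonoidAlgebra k Ω)
    (hP : ∀ (x y : A) (α β : Ω),
      P (x ⊗ₜ MonoidAlgebra.single α (1 : k)) (y ⊗ₜ MonoidAlgebra.single β (1 : k)) =
        (prec α β x y) ⊗ₜ MonoidAlgebra.single (α * β) (1 : k))
    (hS : ∀ (x y : A) (α β : Ω),
      S (x ⊗ₜ MonoidAlgebra.single α (1 : k)) (y ⊗ₜ MonoidAlgebra.single β (1 : k)) =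
        (succ α β x y) ⊗ₜ MonoidAlgebra.single (α * β) (1 : k)) :
    ((∀ X Y Z : A ⊗[k] MonoidAlgebra k Ω,
        P (S X Y) Z - S X (P Y Z) = P (S Z Y) X - S Z (P Y X)) ∧
     (∀ X Y Z : A ⊗[k] MonoidAlgebra k Ω,
        S (S X Y + P X Y) Z - S X (S Y Z) =
          P (P Z Y) X - P Z (S Y X + P Y X))) ↔
    ((∀ (α β γ : Ω) (x y z : A),
        prec (α * β) γ (succ α β x y) z - succ α (β * γ) x (prec β γ y z) =
          prec (γ * β) α (succ γ β z y) x - succ γ (β * α) z (prec β α y x)) ∧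
     (∀ (α β γ : Ω) (x y z : A),
        succ (α * β) γ (prec α β x y + succ α β x y) z -
            succ α (β * γ) x (succ β γ y z) =
          prec (γ * β) α (prec γ β z y) x -
            prec γ (β * α) z (prec β α y x + succ β α y x))) := by
  have e1 : ∀ α β γ : Ω, α * (β * γ) = α * β * γ := fun α β γ => (mul_assoc _ _ _).symm
  have e2 : ∀ α β γ : Ω, γ * β * α = α * β * γ := fun α β γ => by
    rw [mul_comm γ β, mul_comm _ α, mul_assoc]
  have pure1 : ∀ (α β γ : Ω) (x y z : A) (X Y Z : A ⊗[k] MonoidAlgebra k Ω),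
      X = x ⊗ₜ MonoidAlgebra.single α (1 : k) → Y = y ⊗ₜ MonoidAlgebra.single β (1 : k) →
      Z = z ⊗ₜ MonoidAlgebra.single γ (1 : k) →
      (P (S X Y) Z - S X (P Y Z) = P (S Z Y) X - S Z (P Y X) ↔
        prec (α * β) γ (succ α β x y) z - succ α (β * γ) x (prec β γ y z) =
          prec (γ * β) α (succ γ β z y) x - succ γ (β * α) z (prec β α y x)) := by
    rintro α β γ x y z _ _ _ rfl rfl rfl
    rw [← tmul_single_inj (k := k) (A := A) (α * β * γ)]
    simp only [hP, hS, TensorProduct.sub_tmul, e1 α β γ, e1 γ β α, e2 α β γ]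
  have pure2 : ∀ (α β γ : Ω) (x y z : A) (X Y Z : A ⊗[k] MonoidAlgebra k Ω),
      X = x ⊗ₜ MonoidAlgebra.single α (1 : k) → Y = y ⊗ₜ MonoidAlgebra.single β (1 : k) →
      Z = z ⊗ₜ MonoidAlgebra.single γ (1 : k) →
      (S (S X Y + P X Y) Z - S X (S Y Z) = P (P Z Y) X - P Z (S Y X + P Y X) ↔
        succ (α * β) γ (prec α β x y + succ α β x y) z -
            succ α (β * γ) x (succ β γ y z) =
          prec (γ * β) α (prec γ β z y) x -
            prec γ (β * α) z (prec β α y x + succ β α y x)) := by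
    rintro α β γ x y z _ _ _ rfl rfl rfl
    rw [← tmul_single_inj (k := k) (A := A) (α * β * γ), add_comm (prec α β x y),
      add_comm (prec β α y x)]
    simp only [hP, hS, TensorProduct.sub_tmul, ← TensorProduct.add_tmul,
      e1 α β γ, e1 γ β α, e2 α β γ]
  constructor
  · rintro ⟨h1, h2⟩
    exact ⟨fun α β γ x y z => (pure1 α β γ x y z _ _ _ rfl rfl rfl).1 (h1 _ _ _),
      fun α β γ x y z => (pure2 α β γ x y z _ _ _ rfl rfl rfl).1 (h2 _ _ _)⟩
  · rintro ⟨h1, h2⟩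
    constructor
    · intro X Y Z
      induction X using tensor_single_induction with
      | h0 => simp
      | ha X X' h h' =>
        simp only [map_add, LinearMap.add_apply]
        linear_combination (norm := abel) h + h'
      | hs x α =>
      induction Y using tensor_single_induction with
      | h0 => simp
      | ha X X' h h' =>
        simp only [map_add, LinearMap.add_apply]
        linear_combination (norm := abel) h + h'
      | hs y β =>
      induction Z using tensor_single_induction with
      | h0 => simp
      | ha X X' h h' =>
        simp only [map_add, LinearMap.add_apply]
        linear_combination (norm := abel) h + h'
      | hs z γ =>
      exact (pure1 α β γ x y z _ _ _ rfl rfl rfl).2 (h1 _ _ _ _ _ _)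
    · intro X Y Z
      induction X using tensor_single_induction with
      | h0 => simp
      | ha X X' h h' =>
        simp only [map_add, LinearMap.add_apply] at h h' ⊢
        linear_combination (norm := abel) h + h'
      | hs x α =>
      induction Y using tensor_single_induction with
      | h0 => simp
      | ha X X' h h' =>
        simp only [map_add, LinearMap.add_apply] at h h' ⊢
        linear_combination (norm := abel) h + h'
      | hs y β =>
      induction Z using tensor_single_induction with
      | h0 => simp
      | ha X X' h h' =>
        simp only [map_add, LinearMap.add_apply] at h h' ⊢
        linear_combination (norm := abel) h + h'
      | hs z γ =>
      exact (pure2 α β γ x y z _ _ _ rfl rfl rfl).2 (h2 _ _ _ _ _ _)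
end

section
/- Let (A, ≺_{α,β}, ≻_{α,β}, Ω) be an Ω-relative pre-anti-flexible algebra. Define, for all (α,β) ∈ Ω² and x, y ∈ A, x ◀_{α,β} y := x ≺_{α,β} y − y ≻_{β,α} x. Then (A, ◀_{α,β}, Ω) is an Ω-relative right pre-Lie algebra, i.e. (x ◀_{α,β} y) ◀_{αβ,γ} z − x ◀_{α,βγ} (y ◀_{β,γ} z) = (x ◀_{α,γ} z) ◀_{αγ,β} y − x ◀_{α,γβ} (z ◀_{γ,β} y) for all x, y, z ∈ A and α, β, γ ∈ Ω. -/
/-- `x ◀_{α,β} y := x ≺_{α,β} y − y ≻_{β,α} x` turns an Ω-relative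
pre-anti-flexible algebra into an Ω-relative right pre-Lie algebra. -/
theorem relativePreAntiFlexible_to_relativeRightPreLie
    (k : Type*) [Field k] (Ω : Type*) [CommSemigroup Ω]
    (A : Type*) [AddCommGroup A] [Module k A]
    (prec succ : Ω → Ω → A →ₗ[k] A →ₗ[k] A)
    (h1 : ∀ (α β γ : Ω) (x y z : A),
      prec (α * β) γ (succ α β x y) z - succ α (β * γ) x (prec β γ y z) =
        prec (γ * β) α (succ γ β z y) x - succ γ (β * α) z (prec β α y x))
    (h2 : ∀ (α β γ : Ω) (x y z : A),
      succ (α * β) γ (prec α β x y + succ α β x y) z - succ α (β * γ) x (succ β γ y z) =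
        prec (γ * β) α (prec γ β z y) x - prec γ (β * α) z (prec β α y x + succ β α y x))
    (tril : Ω → Ω → A → A → A)
    (htril : ∀ (α β : Ω) (x y : A), tril α β x y = prec α β x y - succ β α y x) :
    ∀ (α β γ : Ω) (x y z : A),
      tril (α * β) γ (tril α β x y) z - tril α (β * γ) x (tril β γ y z) =
        tril (α * γ) β (tril α γ x z) y - tril α (γ * β) x (tril γ β z y) := by
  intro α β γ x y z
  have e1 := h1 β α γ y x z
  have e2 := h2 γ β α z y x
  have e3 := h2 β γ α y z x
  simp only [htril, map_sub, map_add, LinearMap.sub_apply, LinearMap.add_apply] at e1 e2 e3 ⊢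
  rw [mul_comm β α, mul_comm γ α] at e1
  rw [mul_comm γ β, mul_comm β α] at e2
  rw [mul_comm γ α] at e3
  rw [mul_comm γ β] at e3 ⊢
  rw [← sub_eq_zero] at e1 e2 e3 ⊢
  have e4 := congrArg₂ (· - ·) (congrArg₂ (· + ·) e1 e2) e3
  grind
end

section
/- Let (A, ≺_{α,β}, ≻_{α,β}, Ω) be an Ω-relative pre-anti-flexible algebra with underlying Ω-relative anti-flexible product x ⊛_{α,β} y := x ≺_{α,β} y + x ≻_{α,β} y. Define [x,y]_{α,β} := x ⊛_{α,β} y − y ⊛_{β,α} x = (x ≻_{α,β} y + x ≺_{α,β} y) − (y ≻_{β,α} x + y ≺_{β,α} x). Then (A, [·,·]_{α,β}, Ω) is an Ω-relative Lie algebra: [x,y]_{α,β} + [y,x]_{β,α} = 0 and [[x,y]_{α,β}, z]_{αβ,γ} + [[y,z]_{β,γ}, x]_{βγ,α} + [[z,x]_{γ,α}, y]_{γα,β} = 0 for all x, y, z ∈ A and α, β, γ ∈ Ω. -/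
/-- the commutator `[x,y]_{α,β} := x ⊛_{α,β} y − y ⊛_{β,α} x` of
the underlying relative anti-flexible product of an Ω-relative pre-anti-flexible
algebra is an Ω-relative Lie bracket. -/
theorem relativePreAntiFlexible_to_relativeLie
    (k : Type*) [Field k] (Ω : Type*) [CommSemigroup Ω]
    (A : Type*) [AddCommGroup A] [Module k A]
    (prec succ : Ω → Ω → A →ₗ[k] A →ₗ[k] A)
    (h1 : ∀ (α β γ : Ω) (x y z : A),
      prec (α * β) γ (succ α β x y) z - succ α (β * γ) x (prec β γ y z) =
        prec (γ * β) α (succ γ β z y) x - succ γ (β * α) z (prec β α y x))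
    (h2 : ∀ (α β γ : Ω) (x y z : A),
      succ (α * β) γ (prec α β x y + succ α β x y) z - succ α (β * γ) x (succ β γ y z) =
        prec (γ * β) α (prec γ β z y) x - prec γ (β * α) z (prec β α y x + succ β α y x))
    (ast : Ω → Ω → A → A → A)
    (hast : ∀ (α β : Ω) (x y : A), ast α β x y = prec α β x y + succ α β x y)
    (br : Ω → Ω → A → A → A)
    (hbr : ∀ (α β : Ω) (x y : A), br α β x y = ast α β x y - ast β α y x) :
    (∀ (α β : Ω) (x y : A), br α β x y + br β α y x = 0) ∧
    (∀ (α β γ : Ω) (x y z : A),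
      br (α * β) γ (br α β x y) z + br (β * γ) α (br β γ y z) x +
        br (γ * α) β (br γ α z x) y = 0) := by
  refine ⟨fun α β x y => by rw [hbr, hbr]; abel, fun α β γ x y z => ?_⟩
  have a1 := h1 α β γ x y z
  have a2 := h1 β γ α y z x
  have a3 := h1 γ α β z x y
  have b1 := h2 α β γ x y z
  have b2 := h2 β γ α y z x
  have b3 := h2 γ α β z x y
  have c1 := h2 γ β α z y x
  have c2 := h2 α γ β x z y
  have c3 := h2 β α γ y x z
  simp only [mul_comm β α, mul_comm γ β, mul_comm α γ, map_add, LinearMap.add_apply]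
    at a1 a2 a3 b1 b2 b3 c1 c2 c3
  simp only [hbr, hast, map_add, map_sub, LinearMap.add_apply, LinearMap.sub_apply]
  rw [← sub_eq_zero] at a1 a2 a3 b1 b2 b3 c1 c2 c3
  linear_combination (norm := abel) a1 + a2 + a3 + b1 + b2 + b3 - c1 - c2 - c3
end

section
/- Let (A, ⊛_{α,β}, Ω) be an Ω-relative anti-flexible algebra, and define x ⊚_{α,β} y := x ⊛_{α,β} y + y ⊛_{β,α} x and [x,y]_{α,β} := x ⊛_{α,β} y − y ⊛_{β,α} x. Then for all x, y, z ∈ A and α, β, γ ∈ Ω, the ⊚-associator satisfies (x ⊚_{α,β} y) ⊚_{αβ,γ} z − x ⊚_{α,βγ} (y ⊚_{β,γ} z) = [y, [x, z]_{α,γ}]_{β,αγ}. -/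
/-- on an Ω-relative anti-flexible algebra, the ⊚-associator of
`x ⊚_{α,β} y := x ⊛_{α,β} y + y ⊛_{β,α} x` equals `[y,[x,z]_{α,γ}]_{β,αγ}` for
the commutator bracket. -/
theorem relativeAntiFlexible_anticommutator_associator
    (k : Type*) [Field k] (Ω : Type*) [CommSemigroup Ω]
    (A : Type*) [AddCommGroup A] [Module k A]
    (mul : Ω → Ω → A →ₗ[k] A →ₗ[k] A)
    (haf : ∀ (α β γ : Ω) (x y z : A),
      mul (α * β) γ (mul α β x y) z - mul α (β * γ) x (mul β γ y z) =
        mul (γ * β) α (mul γ β z y) x - mul γ (β * α) z (mul β α y x))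
    (circ : Ω → Ω → A → A → A)
    (hcirc : ∀ (α β : Ω) (x y : A), circ α β x y = mul α β x y + mul β α y x)
    (br : Ω → Ω → A → A → A)
    (hbr : ∀ (α β : Ω) (x y : A), br α β x y = mul α β x y - mul β α y x) :
    ∀ (α β γ : Ω) (x y z : A),
      circ (α * β) γ (circ α β x y) z - circ α (β * γ) x (circ β γ y z) =
        br β (α * γ) y (br α γ x z) := by
  intro α β γ x y z
  have h1 := haf α β γ x y z
  have h2 := haf β α γ y x z
  have h3 := haf α γ β x z y
  rw [mul_comm γ β, mul_comm β α] at h1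
  rw [mul_comm β α, mul_comm γ α] at h2
  rw [mul_comm γ β, mul_comm γ α] at h3
  simp only [hcirc, hbr, map_add, map_sub, LinearMap.add_apply, LinearMap.sub_apply]
  linear_combination (norm := abel) h1 + h2 + h3
end

section
/- Let (A, ·_{α,β}, Ω) be an Ω-relative anti-flexible algebra and let R_α : A → A (α ∈ Ω) be a Rota-Baxter family operator on A, i.e. a family of k-linear maps satisfying R_α(x) ·_{α,β} R_β(y) = R_{αβ}(R_α(x) ·_{α,β} y + x ·_{α,β} R_β(y)) for all x, y ∈ A and α, β ∈ Ω. Then the operations x ≺_{α,β} y := x ·_{α,β} R_β(y) and x ≻_{α,β} y := R_α(x) ·_{α,β} y make (A, ≺_{α,β}, ≻_{α,β}, Ω) an Ω-relative pre-anti-flexible algebra. -/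
/-- a Rota-Baxter family operator on an Ω-relative anti-flexible
algebra induces an Ω-relative pre-anti-flexible algebra via
`x ≺_{α,β} y := x ·_{α,β} R_β(y)` and `x ≻_{α,β} y := R_α(x) ·_{α,β} y`. -/
theorem rotaBaxterFamily_to_relativePreAntiFlexible
    (k : Type*) [Field k] (Ω : Type*) [CommSemigroup Ω]
    (A : Type*) [AddCommGroup A] [Module k A]
    (mul : Ω → Ω → A →ₗ[k] A →ₗ[k] A)
    (haf : ∀ (α β γ : Ω) (x y z : A),
      mul (α * β) γ (mul α β x y) z - mul α (β * γ) x (mul β γ y z) =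
        mul (γ * β) α (mul γ β z y) x - mul γ (β * α) z (mul β α y x))
    (R : Ω → A →ₗ[k] A)
    (hRB : ∀ (α β : Ω) (x y : A),
      mul α β (R α x) (R β y) = R (α * β) (mul α β (R α x) y + mul α β x (R β y)))
    (prec succ : Ω → Ω → A → A → A)
    (hprec : ∀ (α β : Ω) (x y : A), prec α β x y = mul α β x (R β y))
    (hsucc : ∀ (α β : Ω) (x y : A), succ α β x y = mul α β (R α x) y) :
    (∀ (α β γ : Ω) (x y z : A),
      prec (α * β) γ (succ α β x y) z - succ α (β * γ) x (prec β γ y z) =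
        prec (γ * β) α (succ γ β z y) x - succ γ (β * α) z (prec β α y x)) ∧
    (∀ (α β γ : Ω) (x y z : A),
      succ (α * β) γ (prec α β x y + succ α β x y) z -
          succ α (β * γ) x (succ β γ y z) =
        prec (γ * β) α (prec γ β z y) x -
          prec γ (β * α) z (prec β α y x + succ β α y x)) := by
  refine ⟨fun α β γ x y z => ?_, fun α β γ x y z => ?_⟩
  · simp only [hprec, hsucc]
    exact haf α β γ (R α x) y (R γ z)
  · simp only [hprec, hsucc]
    rw [add_comm (mul α β x (R β y)), ← hRB, add_comm (mul β α y (R α x)), ← hRB]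
    exact haf α β γ (R α x) (R β y) z
end
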